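/- arXiv:1607.05772 — 2 statements merged into one kernel-verified Lean document; each statement's English description precedes it below -/
import Mathlib

section
/- Let K be an algebraically closed field of characteristic 0, let d, e ∈ K with d ≠ 0 and e ≠ 0, and let F : K³ → K³ be the polynomial map F(X,Y,Z) = (X² + Y² − Z², dXY, eXZ). Then for every n ≥ 1 the three components of the n-fold composite F∘F∘⋯∘F (n times), which are homogeneous polynomials of degree 2ⁿ in K[X,Y,Z], have no nonconstant common divisor; consequently the induced rational self-map f of P² satisfies deg(fⁿ) = 2ⁿ for all n ≥ 1. -/
/-!
Write the `n`-th iterate as `(Aₙ, Bₙ, Cₙ)`. The last two coordinates of `F` are multiples of the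
first one, so `Bₙ = dⁿ Y Sₙ` and `Cₙ = eⁿ Z Sₙ` with `Sₙ = A₀ ⋯ Aₙ₋₁`, and therefore
`Aₙ₊₁ = Aₙ² + (dⁿ Y + eⁿ Z) (dⁿ Y - eⁿ Z) Sₙ²`.
At the point `(1, 0, 0)` every `Aₙ` takes the value `1` while linear forms in `Y` and `Z` vanish, so
`Aₙ` is prime to every nonzero such form: a divisor of the form that does not vanish at the point
leaves the whole degree to its cofactor. Hence `Aₙ` prime to `Sₙ` implies `Aₙ₊₁` prime to
`Sₙ₊₁ = Sₙ Aₙ`, and `Aₙ` is prime to `Bₙ + Cₙ = (dⁿ Y + eⁿ Z) Sₙ`.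
-/

open Matrix MvPolynomial
open scoped Classical

noncomputable section

/-- `PGL₃(K)`: the quotient of `GL₃(K)` by its center (the nonzero scalar matrices). -/
abbrev PGL3 (K : Type*) [Field K] : Type _ :=
  GL (Fin 3) K ⧸ Subgroup.center (GL (Fin 3) K)

/-- The class in `PGL₃(K)` of a matrix (sent to `1` if the matrix is not invertible). -/
def toPGL3 {K : Type*} [Field K] (M : Matrix (Fin 3) (Fin 3) K) : PGL3 K :=
  if h : M.det ≠ 0 then
    QuotientGroup.mk (Matrix.GeneralLinearGroup.mkOfDetNeZero M h) else 1

/-- The automorphism group (as a set of classes in `PGL₃(K)`) of a polynomial self-map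
`F` of `K³`: the classes `[M]` such that `F(M·v) = c·M·F(v)` for some `c ≠ 0` and all `v`. -/
def AutQ {K : Type*} [Field K] (F : (Fin 3 → K) → (Fin 3 → K)) : Set (PGL3 K) :=
  {φ | ∃ M : GL (Fin 3) K, (QuotientGroup.mk M : PGL3 K) = φ ∧
    ∃ c : K, c ≠ 0 ∧ ∀ v : Fin 3 → K,
      F ((M : Matrix (Fin 3) (Fin 3) K) *ᵥ v) = c • ((M : Matrix (Fin 3) (Fin 3) K) *ᵥ F v)}

/-- Two polynomial self-maps of `K³` are `PGL₃(K)`-conjugate. -/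
def PGLConj {K : Type*} [Field K] (F F' : (Fin 3 → K) → (Fin 3 → K)) : Prop :=
  ∃ (M : Matrix (Fin 3) (Fin 3) K) (c : K), M.det ≠ 0 ∧ c ≠ 0 ∧
    ∀ v : Fin 3 → K, F (M *ᵥ v) = c • (M *ᵥ F' v)

/-- The `n`-fold composite of the polynomial self-map of `K³` whose coordinates are the
polynomials `P 0, P 1, P 2`, as a triple of polynomials (the `0`-th iterate is the identity). -/
def iterComp {K : Type*} [CommSemiring K] (P : Fin 3 → MvPolynomial (Fin 3) K) :
    ℕ → Fin 3 → MvPolynomial (Fin 3) K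
  | 0 => fun i => MvPolynomial.X i
  | n + 1 => fun i => MvPolynomial.aeval (iterComp P n) (P i)

section Coprimality

variable {σ R : Type*}

theorem isUnit_of_totalDegree_eq_zero_of_isUnit_eval [CommSemiring R] {p : MvPolynomial σ R}
    {x : σ → R} (hp : p.totalDegree = 0) (hx : IsUnit (eval x p)) : IsUnit p := by
  rw [totalDegree_eq_zero_iff_eq_C] at hp
  rw [hp, eval_C] at hx
  rw [hp]
  exact hx.map C

theorem totalDegree_ne_zero_of_eval_eq_zero [CommSemiring R] {p : MvPolynomial σ R}
    {x : σ → R} (hp : p ≠ 0) (hx : eval x p = 0) : p.totalDegree ≠ 0 := by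
  intro h
  rw [totalDegree_eq_zero_iff_eq_C] at h
  rw [h, eval_C] at hx
  exact hp (by rw [h, hx, C_0])

theorem isRelPrime_of_isUnit_eval_of_totalDegree_le_one [CommSemiring R] [NoZeroDivisors R]
    {p l : MvPolynomial σ R} {x : σ → R} (hp : IsUnit (eval x p)) (hl : l.totalDegree ≤ 1)
    (hl₀ : l ≠ 0) (hlx : eval x l = 0) : IsRelPrime p l := by
  rintro q hqp ⟨r, rfl⟩
  have hqx : IsUnit (eval x q) := isUnit_of_dvd_unit (map_dvd (eval x) hqp) hp
  have hrx : eval x r = 0 := by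
    rwa [map_mul, hqx.mul_right_eq_zero] at hlx
  have hr : r.totalDegree ≠ 0 :=
    totalDegree_ne_zero_of_eval_eq_zero (right_ne_zero_of_mul hl₀) hrx
  rw [totalDegree_mul_of_isDomain (left_ne_zero_of_mul hl₀) (right_ne_zero_of_mul hl₀)] at hl
  exact isUnit_of_totalDegree_eq_zero_of_isUnit_eval (by omega) hqx

theorem C_mul_X_add_C_mul_X_ne_zero [CommSemiring R] {i j : σ} (hij : i ≠ j) {a b : R}
    (hab : a ≠ 0 ∨ b ≠ 0) : (C a * X i + C b * X j : MvPolynomial σ R) ≠ 0 := by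
  intro h
  have ha : a = 0 := by simpa [hij.symm] using congrArg (eval (Pi.single i 1)) h
  have hb : b = 0 := by simpa [hij] using congrArg (eval (Pi.single j 1)) h
  exact hab.elim (· ha) (· hb)

theorem isRelPrime_C_mul_X_add_C_mul_X [CommSemiring R] [NoZeroDivisors R] {p : MvPolynomial σ R}
    {x : σ → R} (hp : IsUnit (eval x p)) {i j : σ} (hij : i ≠ j) (hi : x i = 0) (hj : x j = 0)
    {a b : R} (hab : a ≠ 0 ∨ b ≠ 0) : IsRelPrime p (C a * X i + C b * X j) := by
  have hdeg : (C a * X i + C b * X j : MvPolynomial σ R).IsHomogeneous 1 :=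
    (isHomogeneous_C_mul_X a i).add (isHomogeneous_C_mul_X b j)
  exact isRelPrime_of_isUnit_eval_of_totalDegree_le_one hp hdeg.totalDegree_le
    (C_mul_X_add_C_mul_X_ne_zero hij hab) (by simp [hi, hj])

theorem isRelPrime_sq_add_mul_sq_mul [CommRing R] [DecompositionMonoid R] {a l s : R}
    (hs : IsRelPrime a s) (hl : IsRelPrime a l) : IsRelPrime (a ^ 2 + l * s ^ 2) (s * a) := by
  have prime_to_s : IsRelPrime (a ^ 2 + l * s ^ 2) s := by
    rw [pow_two s, ← mul_assoc]
    exact hs.pow_left.add_mul_right_left (l * s)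
  have prime_to_a : IsRelPrime (a ^ 2 + l * s ^ 2) a := by
    rw [pow_two a]
    exact (hl.mul_right hs.pow_right).symm.mul_add_left_left a
  exact prime_to_s.mul_right prime_to_a

end Coprimality

theorem isHomogeneous_iterComp {R : Type*} [CommSemiring R]
    {P : Fin 3 → MvPolynomial (Fin 3) R} {k : ℕ} (hP : ∀ i, (P i).IsHomogeneous k) (n : ℕ)
    (i : Fin 3) : (iterComp P n i).IsHomogeneous (k ^ n) := by
  induction n generalizing i with
  | zero => exact isHomogeneous_X R i
  | succ n ih => exact pow_succ k n ▸ (hP i).aeval _ ih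

section QuadMap

variable {R : Type*} [CommRing R]

/-- The coordinates `(X² + Y² - Z², dXY, eXZ)` of the quadratic map under study, over an arbitrary
commutative ring; the variables `X, Y, Z` are `X 0, X 1, X 2`. -/
def quadMap (d e : R) : Fin 3 → MvPolynomial (Fin 3) R :=
  ![X 0 ^ 2 + X 1 ^ 2 - X 2 ^ 2, C d * (X 0 * X 1), C e * (X 0 * X 2)]

theorem isHomogeneous_quadMap (d e : R) (i : Fin 3) : (quadMap d e i).IsHomogeneous 2 := by
  have homogeneous_coord (c : R) (j : Fin 3) :
      (C c * (X 0 * X j) : MvPolynomial (Fin 3) R).IsHomogeneous 2 :=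
    ((isHomogeneous_X R 0).mul (isHomogeneous_X R j)).C_mul c
  fin_cases i
  · exact ((isHomogeneous_X_pow 0 2).add (isHomogeneous_X_pow 1 2)).sub (isHomogeneous_X_pow 2 2)
  · exact homogeneous_coord d 1
  · exact homogeneous_coord e 2

/-- The cofactor `Sₙ`: the product of the first coordinates of the iterates of order less than `n`,
which divides the other two coordinates of the `n`-th iterate. -/
def quadMapCofactor (d e : R) (n : ℕ) : MvPolynomial (Fin 3) R :=
  ∏ k ∈ Finset.range n, iterComp (quadMap d e) k 0

theorem quadMapCofactor_succ (d e : R) (n : ℕ) :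
    quadMapCofactor d e (n + 1) = quadMapCofactor d e n * iterComp (quadMap d e) n 0 :=
  Finset.prod_range_succ _ n

theorem iterComp_quadMap_one (d e : R) (n : ℕ) :
    iterComp (quadMap d e) n 1 = C (d ^ n) * X 1 * quadMapCofactor d e n := by
  induction n with
  | zero => simp [iterComp, quadMapCofactor]
  | succ n ih =>
    have recurrence : iterComp (quadMap d e) (n + 1) 1 =
        C d * (iterComp (quadMap d e) n 0 * iterComp (quadMap d e) n 1) := by
      simp [iterComp, quadMap, algebraMap_eq]
    rw [recurrence, ih, quadMapCofactor_succ, pow_succ, C_mul]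
    ring

theorem iterComp_quadMap_two (d e : R) (n : ℕ) :
    iterComp (quadMap d e) n 2 = C (e ^ n) * X 2 * quadMapCofactor d e n := by
  induction n with
  | zero => simp [iterComp, quadMapCofactor]
  | succ n ih =>
    have recurrence : iterComp (quadMap d e) (n + 1) 2 =
        C e * (iterComp (quadMap d e) n 0 * iterComp (quadMap d e) n 2) := by
      simp [iterComp, quadMap, algebraMap_eq]
    rw [recurrence, ih, quadMapCofactor_succ, pow_succ, C_mul]
    ring

theorem iterComp_quadMap_succ_zero (d e : R) (n : ℕ) :
    iterComp (quadMap d e) (n + 1) 0 = iterComp (quadMap d e) n 0 ^ 2 +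
      (C (d ^ n) * X 1 + C (e ^ n) * X 2) * (C (d ^ n) * X 1 + C (-e ^ n) * X 2) *
        quadMapCofactor d e n ^ 2 := by
  have recurrence : iterComp (quadMap d e) (n + 1) 0 = iterComp (quadMap d e) n 0 ^ 2 +
      iterComp (quadMap d e) n 1 ^ 2 - iterComp (quadMap d e) n 2 ^ 2 := by
    simp [iterComp, quadMap]
  rw [recurrence, iterComp_quadMap_one, iterComp_quadMap_two, C_neg]
  ring

theorem eval_iterComp_quadMap_zero (d e : R) (n : ℕ) :
    eval ![1, 0, 0] (iterComp (quadMap d e) n 0) = 1 := by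
  induction n with
  | zero => simp [iterComp]
  | succ n ih => simp [iterComp_quadMap_succ_zero, ih]

theorem isRelPrime_iterComp_quadMap_zero_linear [NoZeroDivisors R] (d e : R) (n : ℕ) {a b : R}
    (hab : a ≠ 0 ∨ b ≠ 0) :
    IsRelPrime (iterComp (quadMap d e) n 0) (C a * X 1 + C b * X 2) :=
  isRelPrime_C_mul_X_add_C_mul_X (x := ![1, 0, 0])
    (by simp only [eval_iterComp_quadMap_zero, isUnit_one]) (by decide) rfl rfl hab

variable [UniqueFactorizationMonoid R] {d e : R}

theorem isRelPrime_iterComp_quadMap_zero_cofactor (hde : d ≠ 0 ∨ e ≠ 0) (n : ℕ) :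
    IsRelPrime (iterComp (quadMap d e) n 0) (quadMapCofactor d e n) := by
  induction n with
  | zero => exact isRelPrime_one_right
  | succ n ih =>
    have plus := isRelPrime_iterComp_quadMap_zero_linear d e n
      (hde.imp (pow_ne_zero n) (pow_ne_zero n))
    have minus := isRelPrime_iterComp_quadMap_zero_linear d e n
      (hde.imp (pow_ne_zero n) (neg_ne_zero.2 <| pow_ne_zero n ·))
    rw [iterComp_quadMap_succ_zero, quadMapCofactor_succ]
    exact isRelPrime_sq_add_mul_sq_mul ih (plus.mul_right minus)

theorem isRelPrime_iterComp_quadMap_zero_one_add_two (hde : d ≠ 0 ∨ e ≠ 0) (n : ℕ) :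
    IsRelPrime (iterComp (quadMap d e) n 0)
      (iterComp (quadMap d e) n 1 + iterComp (quadMap d e) n 2) := by
  rw [iterComp_quadMap_one, iterComp_quadMap_two, ← add_mul]
  exact (isRelPrime_iterComp_quadMap_zero_linear d e n
    (hde.imp (pow_ne_zero n) (pow_ne_zero n))).mul_right
      (isRelPrime_iterComp_quadMap_zero_cofactor hde n)

theorem stmt11_general (hde : d ≠ 0 ∨ e ≠ 0) (n : ℕ) :
    (∀ q : MvPolynomial (Fin 3) R, (∀ i, q ∣ iterComp (quadMap d e) n i) → IsUnit q) ∧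
      ∀ i, (iterComp (quadMap d e) n i).IsHomogeneous (2 ^ n) :=
  ⟨fun _ hq => isRelPrime_iterComp_quadMap_zero_one_add_two hde n (hq 0) (dvd_add (hq 1) (hq 2)),
    isHomogeneous_iterComp (isHomogeneous_quadMap d e) n⟩

end QuadMap

theorem stmt11 {K : Type*} [Field K] [IsAlgClosed K] [CharZero K]
    (d e : K) (hd : d ≠ 0) (he : e ≠ 0) :
    let P : Fin 3 → MvPolynomial (Fin 3) K :=
      ![X 0 ^ 2 + X 1 ^ 2 - X 2 ^ 2, C d * (X 0 * X 1), C e * (X 0 * X 2)]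
    ∀ n : ℕ, 1 ≤ n →
      (∀ q : MvPolynomial (Fin 3) K, (∀ i, q ∣ iterComp P n i) → IsUnit q) ∧
      ∀ i, (iterComp P n i).IsHomogeneous (2 ^ n) := by
  intro _ n _
  exact stmt11_general (.inl hd) n
end
end

section
/- Let K be an algebraically closed field of characteristic 0 and let F = (F₀, F₁, F₂) be a triple of homogeneous polynomials of degree 2 in K[X,Y,Z] such that F₀, F₁, F₂ have no nonconstant common divisor and are algebraically independent over K (so F defines a dominant rational self-map of P² of degree 2). If Aut(F) contains a subgroup isomorphic to (ℤ/2ℤ) × (ℤ/2ℤ) or a subgroup isomorphic to ℤ/5ℤ, then F does not define a morphism of P²: there exists v ∈ K³ with v ≠ 0 and F₀(v) = F₁(v) = F₂(v) = 0. -/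
open Matrix MvPolynomial
open scoped Classical

noncomputable section

/-!
A quadratic map `f` with `f (M v) = c M f(v)` commutes with `c⁻¹ M`, and no other multiple of `M`
commutes with `f ≠ 0`. Hence the projective automorphism group lifts to a group of linear maps
commuting with `f`. Suppose `f` vanishes only at the origin.

An involution commuting with `f` has its `-1`-eigenspace mapped into its fixed space, as `f` is
even. If the former has dimension at least 2 and the latter at most 1, then `f` restricts to
multiples of a single form on a plane, which has a nontrivial zero. In dimension 3 every nontrivial
involution therefore has determinant `-1`, and the product of two of them is not of this kind.

If a map of order 5 commutes with `f`, then `f` sends eigenvectors for `μ` to eigenvectors for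
`μ ^ 2`. As 2 is a primitive root modulo 5, all four primitive fifth roots of unity are
eigenvalues, too many for dimension 3.
-/

open Module
open scoped Polynomial

section HomogeneousMap

variable {R σ ι : Type*} [CommSemiring R]

/-- The polynomial map `v ↦ (F j (v))_j` given by a family `F` of polynomials. -/
def polyMap (F : ι → MvPolynomial σ R) (v : σ → R) : ι → R :=
  fun j => eval v (F j)

theorem eval_smul_of_isHomogeneous {p : MvPolynomial σ R} {d : ℕ} (hp : p.IsHomogeneous d)
    (s : R) (v : σ → R) : eval (s • v) p = s ^ d * eval v p := by
  rw [eval_eq, eval_eq, Finset.mul_sum]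
  refine Finset.sum_congr rfl fun m hm => ?_
  have hdeg : ∑ i ∈ m.support, m i = d :=
    (hp.degree_eq_sum_deg_support hm).symm
  simp only [Pi.smul_apply, smul_eq_mul, mul_pow, Finset.prod_mul_distrib,
    Finset.prod_pow_eq_pow_sum, hdeg]
  ring

theorem polyMap_smul {F : ι → MvPolynomial σ R} {d : ℕ} (hF : ∀ i, (F i).IsHomogeneous d)
    (s : R) (v : σ → R) : polyMap F (s • v) = s ^ d • polyMap F v :=
  funext fun i => eval_smul_of_isHomogeneous (hF i) s v

/-- The one-variable polynomial `t ↦ p (v + t w)`, the restriction of `p` to an affine line. -/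
def restrictLine (p : MvPolynomial σ R) (v w : σ → R) : R[X] :=
  aeval (fun i => Polynomial.C (v i) + Polynomial.X * Polynomial.C (w i)) p

theorem eval_restrictLine (p : MvPolynomial σ R) (v w : σ → R) (t : R) :
    (restrictLine p v w).eval t = eval (v + t • w) p := by
  rw [restrictLine, ← Polynomial.coe_aeval_eq_eval, ← AlgHom.comp_apply, comp_aeval,
    ← aeval_eq_eval]
  congr 2
  funext i
  simp only [map_add, map_mul, Polynomial.aeval_C, Polynomial.aeval_X, Algebra.algebraMap_self,
    RingHom.id_apply, Pi.add_apply, Pi.smul_apply, smul_eq_mul]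

end HomogeneousMap

section CommonZero

variable {K σ ι : Type*} [Field K] [IsAlgClosed K] {d : ℕ}

theorem exists_eval_add_smul_eq_zero_or_eval_eq_zero {p : MvPolynomial σ K}
    (hp : p.IsHomogeneous d) (hd : d ≠ 0) (v w : σ → K) :
    (∃ t : K, eval (v + t • w) p = 0) ∨ eval w p = 0 := by
  by_cases hdeg : (restrictLine p v w).degree = 0
  · right
    obtain ⟨c, hc⟩ : ∃ c, restrictLine p v w = Polynomial.C c :=
      ⟨_, Polynomial.eq_C_of_degree_eq_zero hdeg⟩
    have hconst (t : K) : eval (v + t • w) p = c := by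
      rw [← eval_restrictLine, hc, Polynomial.eval_C]
    -- By homogeneity `p (w + s v) = s ^ d p (v + s⁻¹ w)` off `s = 0`; now specialize to `s = 0`.
    have hrev : restrictLine p w v = Polynomial.C c * Polynomial.X ^ d := by
      refine Polynomial.eq_of_infinite_eval_eq _ _
        ((Set.finite_singleton (0 : K)).infinite_compl.mono fun s hs => ?_)
      have hs' : s ≠ 0 := hs
      have hsmul : w + s • v = s • (v + s⁻¹ • w) := by
        rw [smul_add, smul_inv_smul₀ hs', add_comm]
      rw [Set.mem_ofPred_eq, eval_restrictLine, hsmul, eval_smul_of_isHomogeneous hp, hconst,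
        Polynomial.eval_C_mul, Polynomial.eval_X_pow, mul_comm]
    simpa [hrev, hd] using (eval_restrictLine p w v 0).symm
  · left
    obtain ⟨t, ht⟩ := IsAlgClosed.exists_root _ hdeg
    exact ⟨t, by rw [← eval_restrictLine, ht]⟩

theorem exists_mem_ne_zero_eval_eq_zero {p : MvPolynomial σ K} (hp : p.IsHomogeneous d)
    (hd : d ≠ 0) {U : Submodule K (σ → K)} (hU : 1 < finrank K U) :
    ∃ u ∈ U, u ≠ 0 ∧ eval u p = 0 := by
  have : Nontrivial U := nontrivial_of_finrank_pos (zero_lt_one.trans hU)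
  obtain ⟨w, hw⟩ := exists_ne (0 : U)
  obtain ⟨v, hwv⟩ := exists_linearIndependent_pair_of_one_lt_finrank hU hw
  rcases exists_eval_add_smul_eq_zero_or_eval_eq_zero hp hd (v : σ → K) w with ⟨t, ht⟩ | hzero
  · refine ⟨_, (v + t • w).2, fun h => ?_, ht⟩
    have := LinearIndependent.pair_iff.mp hwv t 1
      (by rw [one_smul, add_comm]; exact Subtype.ext h)
    exact one_ne_zero this.2
  · exact ⟨w, w.2, fun h => hw (Subtype.ext h), hzero⟩

theorem exists_ne_zero_polyMap_eq_zero {F : ι → MvPolynomial σ K}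
    (hF : ∀ i, (F i).IsHomogeneous d) (hd : d ≠ 0) {U : Submodule K (σ → K)}
    (hU : 1 < finrank K U) (w : ι → K) (hUw : ∀ u ∈ U, polyMap F u ∈ K ∙ w) :
    ∃ u, u ≠ 0 ∧ polyMap F u = 0 := by
  by_cases hw : w = 0
  · have : Nontrivial U := nontrivial_of_finrank_pos (zero_lt_one.trans hU)
    obtain ⟨u, hu⟩ := exists_ne (0 : U)
    exact ⟨u, fun h => hu (Subtype.ext h), by simpa [hw] using hUw u u.2⟩
  · obtain ⟨i, hi⟩ := Function.ne_iff.mp hw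
    obtain ⟨u, huU, hu, hzero⟩ := exists_mem_ne_zero_eval_eq_zero (hF i) hd hU
    obtain ⟨c, hc⟩ := Submodule.mem_span_singleton.mp (hUw u huU)
    have hc0 : c * w i = 0 := (congrFun hc i).trans hzero
    refine ⟨u, hu, ?_⟩
    rw [← hc, (mul_eq_zero.mp hc0).resolve_right hi, zero_smul]

end CommonZero

section Involution

variable {K V : Type*} [Field K] [AddCommGroup V] [Module K V] {φ : End K V}

theorem apply_eq_neg_of_mem_range_sub_one (hφ : φ * φ = 1) {x : V}
    (hx : x ∈ LinearMap.range (φ - 1)) : φ x = -x := by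
  obtain ⟨y, rfl⟩ := hx
  have hy : φ (φ y) = y := LinearMap.congr_fun hφ y
  simp [hy]

theorem det_eq_neg_one_pow_finrank_range_sub_one [FiniteDimensional K V] (hφ : φ * φ = 1) :
    LinearMap.det φ = (-1) ^ finrank K (LinearMap.range (φ - 1)) := by
  set W := LinearMap.ker (φ - 1)
  have hfix {x : V} (hx : x ∈ W) : φ x = x := sub_eq_zero.mp hx
  have hW : W ≤ W.comap φ := fun x hx => by rwa [Submodule.mem_comap, hfix hx]
  have hrestrict : φ.restrict hW = LinearMap.id :=
    LinearMap.ext fun x => Subtype.ext (hfix x.2)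
  have hquot : W.mapQ W φ hW = (-1 : K) • LinearMap.id := by
    refine Submodule.linearMap_qext _ (LinearMap.ext fun x => ?_)
    have hx : φ x + x ∈ W := by
      have : φ (φ x) = x := LinearMap.congr_fun hφ x
      simp [W, this, add_comm]
    simpa [← Submodule.Quotient.mk_neg, Submodule.Quotient.eq] using hx
  rw [LinearMap.det_eq_det_mul_det W φ hW, hrestrict, hquot, LinearMap.det_smul,
    LinearMap.det_id, LinearMap.det_id, one_mul, mul_one,
    (φ - 1).quotKerEquivRange.finrank_eq]

theorem det_eq_neg_one_of_commute_polyMap [IsAlgClosed K] {σ : Type*} [Fintype σ]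
    (hσ : Fintype.card σ = 3) {F : σ → MvPolynomial σ K} {d : ℕ}
    (hF : ∀ i, (F i).IsHomogeneous d) (hd : d ≠ 0) (heven : Even d)
    (hF0 : ∀ v, v ≠ 0 → polyMap F v ≠ 0) {φ : End K (σ → K)}
    (hcomm : Function.Commute (polyMap F) φ) (hφ : φ * φ = 1) (hne : φ ≠ 1) :
    LinearMap.det φ = -1 := by
  rw [det_eq_neg_one_pow_finrank_range_sub_one hφ]
  refine Odd.neg_one_pow (Nat.not_even_iff_odd.mp fun hrank => ?_)
  have hadd := LinearMap.finrank_range_add_finrank_ker (φ - 1)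
  rw [finrank_fintype_fun_eq_card, hσ] at hadd
  have hpos : finrank K (LinearMap.range (φ - 1)) ≠ 0 := by
    rw [Ne, Submodule.finrank_eq_zero, LinearMap.range_eq_bot, sub_eq_zero]
    exact hne
  obtain ⟨hrange, hker⟩ : 1 < finrank K (LinearMap.range (φ - 1)) ∧
      finrank K (LinearMap.ker (φ - 1)) ≤ 1 := by
    obtain ⟨k, hk⟩ := hrank
    omega
  obtain ⟨w, hw⟩ := finrank_le_one_iff.mp hker
  -- As `d` is even, `F u = F (-u) = F (φ u) = φ (F u)` for `u` in the `-1`-eigenspace.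
  obtain ⟨u, hu, hzero⟩ := exists_ne_zero_polyMap_eq_zero hF hd hrange w fun u hu => by
    have hfix : φ (polyMap F u) = polyMap F u := by
      rw [← hcomm u, apply_eq_neg_of_mem_range_sub_one hφ hu, ← neg_one_smul K u,
        polyMap_smul hF, heven.neg_one_pow, one_smul]
    obtain ⟨c, hc⟩ := hw ⟨polyMap F u, sub_eq_zero.mpr hfix⟩
    exact Submodule.mem_span_singleton.mpr ⟨c, congrArg Subtype.val hc⟩
  exact hF0 u hu hzero

end Involution

section PrimeOrder

variable {K V : Type*} [Field K] [AddCommGroup V] [Module K V] {φ : End K V}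

theorem exists_isPrimitiveRoot_hasEigenvalue [IsAlgClosed K] [FiniteDimensional K V] {p : ℕ}
    (hp : p.Prime) (hpK : (p : K) ≠ 0) (hφ : φ ^ p = 1) (hne : φ ≠ 1) :
    ∃ μ, IsPrimitiveRoot μ p ∧ φ.HasEigenvalue μ := by
  have : Fact p.Prime := ⟨hp⟩
  have : NeZero (p : K) := ⟨hpK⟩
  have : Nontrivial (End K V) := ⟨φ, 1, hne⟩
  have hmul : Polynomial.aeval φ (Polynomial.cyclotomic p K) * (φ - 1) = 0 := by
    simpa [hφ] using congrArg (Polynomial.aeval φ)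
      (Polynomial.cyclotomic_prime_mul_X_sub_one K p)
  have hunit : ¬IsUnit (Polynomial.aeval φ (Polynomial.cyclotomic p K)) := fun h =>
    hne (sub_eq_zero.mp (h.mul_right_eq_zero.mp hmul))
  rw [← spectrum.zero_mem_iff K, spectrum.map_polynomial_aeval_of_nonempty φ _
    (spectrum.nonempty_of_isAlgClosed_of_finiteDimensional K φ)] at hunit
  obtain ⟨μ, hμ, hroot⟩ := hunit
  exact ⟨μ, Polynomial.isRoot_cyclotomic_iff.mp hroot, End.hasEigenvalue_iff_mem_spectrum.mpr hμ⟩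

theorem hasEigenvector_iterate {f : V → V} {d : ℕ} (hf : ∀ (s : K) v, f (s • v) = s ^ d • f v)
    (hf0 : ∀ v, v ≠ 0 → f v ≠ 0) (hcomm : Function.Commute f φ) {μ : K} {v : V}
    (hv : φ.HasEigenvector μ v) (k : ℕ) : φ.HasEigenvector (μ ^ d ^ k) (f^[k] v) := by
  induction k with
  | zero => simpa using hv
  | succ k ih =>
    rw [Function.iterate_succ_apply', pow_succ, pow_mul, End.hasEigenvector_iff,
      End.mem_eigenspace_iff]
    exact ⟨by rw [← hcomm, ih.apply_eq_smul, hf], hf0 _ ih.2⟩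

theorem orderOf_le_finrank_of_hasEigenvalue [FiniteDimensional K V] {f : V → V} {d : ℕ}
    (hf : ∀ (s : K) v, f (s • v) = s ^ d • f v) (hf0 : ∀ v, v ≠ 0 → f v ≠ 0)
    (hcomm : Function.Commute f φ) {μ : K} {n : ℕ} (hn : n ≠ 0)
    (hμ : IsPrimitiveRoot μ n) (hev : φ.HasEigenvalue μ) : orderOf (d : ZMod n) ≤ finrank K V := by
  obtain ⟨v, hv⟩ := hev.exists_hasEigenvector
  have hinj : Function.Injective fun k : Fin (orderOf (d : ZMod n)) => μ ^ d ^ (k : ℕ) := by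
    intro i j hij
    have hmod : d ^ (i : ℕ) ≡ d ^ (j : ℕ) [MOD n] := by
      have h := (hμ.isOfFinOrder hn).pow_eq_pow_iff_modEq.mp hij
      rwa [← hμ.eq_orderOf] at h
    have hpow : (d : ZMod n) ^ (i : ℕ) = (d : ZMod n) ^ (j : ℕ) :=
      mod_cast (ZMod.natCast_eq_natCast_iff _ _ _).mpr hmod
    exact Fin.ext (pow_injOn_Iio_orderOf i.2 j.2 hpow)
  simpa using (End.eigenvectors_linearIndependent' φ _ hinj _
    fun k => hasEigenvector_iterate hf hf0 hcomm hv k).fintype_card_le_finrank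

end PrimeOrder

section LinearAut

variable {K ι : Type*} [Field K] [Fintype ι] [DecidableEq ι]

/-- The group of invertible matrices commuting with a self-map `f` of `K^ι`. For a nonzero
quadratic map it is the lift of the projective automorphism group `AutQ f` to `GL`. -/
def linearAut (f : (ι → K) → (ι → K)) : Subgroup (GL ι K) where
  carrier := {M | Function.Commute f (M : Matrix ι ι K).mulVec}
  one_mem' v := by simp
  mul_mem' {M N} hM hN v := by
    simp only [Units.val_mul, ← mulVec_mulVec]
    rw [hM, hN]
  inv_mem' {M} hM v := by
    have hinv (x : ι → K) : (M : Matrix ι ι K) *ᵥ ((M⁻¹ : GL ι K) : Matrix ι ι K) *ᵥ x = x := by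
      rw [mulVec_mulVec, ← Units.val_mul, mul_inv_cancel, Units.val_one, one_mulVec]
    apply mulVec_injective_of_isUnit M.isUnit
    rw [← hM, hinv, hinv]

theorem eq_one_of_mem_linearAut_of_mem_center {f : (ι → K) → (ι → K)}
    (hf : ∀ (s : K) v, f (s • v) = s ^ 2 • f v) (hf0 : ∃ v, f v ≠ 0) {M : GL ι K}
    (hM : M ∈ linearAut f) (hcenter : M ∈ Subgroup.center (GL ι K)) : M = 1 := by
  rw [GeneralLinearGroup.center_eq_range_scalar] at hcenter
  obtain ⟨s, rfl⟩ := hcenter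
  obtain ⟨v, hv⟩ := hf0
  have hscalar (x : ι → K) :
      (GeneralLinearGroup.scalar ι s : Matrix ι ι K) *ᵥ x = (s : K) • x := by
    ext i
    simp [mulVec_diagonal]
  have hsq : (s : K) ^ 2 • f v = (s : K) • f v := by
    simpa only [hscalar, hf] using hM v
  have hs : s ^ 2 = s := Units.ext (smul_left_injective K hv hsq)
  rw [pow_two, mul_eq_left] at hs
  rw [hs, map_one]

theorem exists_mem_linearAut_mk_eq {f : (Fin 3 → K) → (Fin 3 → K)}
    (hf : ∀ (s : K) v, f (s • v) = s ^ 2 • f v) {x : PGL3 K} (hx : x ∈ AutQ f) :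
    ∃ M ∈ linearAut f, (QuotientGroup.mk M : PGL3 K) = x := by
  obtain ⟨M, rfl, c, hc, hcomm⟩ := hx
  -- If `f (M v) = c M f(v)` then `N = c⁻¹ M` satisfies `f (N v) = c⁻² c M f(v) = N f(v)`.
  set S : GL (Fin 3) K := GeneralLinearGroup.scalar (Fin 3) (Units.mk0 c hc)⁻¹
  have hS : S ∈ Subgroup.center (GL (Fin 3) K) := by
    rw [GeneralLinearGroup.center_eq_range_scalar]
    exact ⟨_, rfl⟩
  have hval : ((M * S : GL (Fin 3) K) : Matrix (Fin 3) (Fin 3) K) =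
      c⁻¹ • (M : Matrix (Fin 3) (Fin 3) K) := by
    ext i j
    simp [S, GeneralLinearGroup.scalar, mul_comm]
  refine ⟨M * S, fun v => ?_, QuotientGroup.mk_mul_of_mem M hS⟩
  have hscale : c⁻¹ ^ 2 * c = c⁻¹ := by field_simp
  rw [hval, smul_mulVec, smul_mulVec, hf, hcomm, smul_smul, hscale]

theorem exists_injective_hom_linearAut {f : (Fin 3 → K) → (Fin 3 → K)}
    (hf : ∀ (s : K) v, f (s • v) = s ^ 2 • f v) (hf0 : ∃ v, f v ≠ 0) {G : Type*} [Group G]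
    {H : Subgroup (PGL3 K)} (hH : (H : Set (PGL3 K)) ⊆ AutQ f) (e : G ≃* H) :
    ∃ τ : G →* linearAut f, Function.Injective τ := by
  let π : linearAut f →* PGL3 K := (QuotientGroup.mk' _).comp (linearAut f).subtype
  have hπ : Function.Injective π := (injective_iff_map_eq_one π).mpr fun M hM =>
    Subtype.ext (eq_one_of_mem_linearAut_of_mem_center hf hf0 M.2
      ((QuotientGroup.eq_one_iff _).mp hM))
  have hrange : H ≤ π.range := fun x hx => by
    obtain ⟨M, hM, rfl⟩ := exists_mem_linearAut_mk_eq hf (hH hx)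
    exact ⟨⟨M, hM⟩, rfl⟩
  let σ := (MonoidHom.ofInjective hπ).symm
  exact ⟨σ.toMonoidHom.comp ((Subgroup.inclusion hrange).comp e.toMonoidHom),
    σ.injective.comp ((Subgroup.inclusion_injective hrange).comp e.injective)⟩

variable [IsAlgClosed K] {d : ℕ}

theorem det_eq_neg_one_of_mul_self_eq_one (hι : Fintype.card ι = 3) {F : ι → MvPolynomial ι K}
    (hF : ∀ i, (F i).IsHomogeneous d) (hd : d ≠ 0) (heven : Even d)
    (hF0 : ∀ v, v ≠ 0 → polyMap F v ≠ 0) {M : linearAut (polyMap F)} (hsq : M * M = 1)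
    (hne : M ≠ 1) : ((M : GL ι K) : Matrix ι ι K).det = -1 := by
  have hMsq : ((M : GL ι K) : Matrix ι ι K) * (M : GL ι K) = 1 :=
    congrArg (fun N : linearAut (polyMap F) => ((N : GL ι K) : Matrix ι ι K)) hsq
  have hMne : ((M : GL ι K) : Matrix ι ι K) ≠ 1 := fun h => hne (Subtype.ext (Units.ext h))
  rw [← LinearMap.det_toLin']
  exact det_eq_neg_one_of_commute_polyMap hι hF hd heven hF0 (φ := toLinAlgEquiv' _)
    (fun v => M.2 v) (by rw [← map_mul, hMsq, map_one])
    ((map_ne_one_iff _ toLinAlgEquiv'.injective).mpr hMne)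

theorem eq_of_commute_of_mul_self_eq_one (hι : Fintype.card ι = 3) {F : ι → MvPolynomial ι K}
    (hF : ∀ i, (F i).IsHomogeneous d) (hd : d ≠ 0) (heven : Even d)
    (hF0 : ∀ v, v ≠ 0 → polyMap F v ≠ 0) (h2 : (2 : K) ≠ 0) {M N : linearAut (polyMap F)}
    (hMN : Commute M N) (hM : M * M = 1) (hN : N * N = 1) (hM1 : M ≠ 1) (hN1 : N ≠ 1) :
    M = N := by
  by_contra hne
  have hprod : M * N ≠ 1 := fun h => hne (mul_right_cancel (h.trans hN.symm))
  have hprodsq : M * N * (M * N) = 1 := by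
    rw [hMN.symm.mul_mul_mul_comm, hM, hN, mul_one]
  have hdet {P : linearAut (polyMap F)} :=
    det_eq_neg_one_of_mul_self_eq_one (M := P) hι hF hd heven hF0
  have hone : (-1 : K) = -1 * -1 := by
    nth_rw 1 [← hdet hprodsq hprod, Subgroup.coe_mul, Units.val_mul, det_mul, hdet hM hM1,
      hdet hN hN1]
  exact h2 (by linear_combination -hone)

theorem orderOf_le_card_of_pow_eq_one {f : (ι → K) → (ι → K)}
    (hf : ∀ (s : K) v, f (s • v) = s ^ d • f v) (hf0 : ∀ v, v ≠ 0 → f v ≠ 0) {p : ℕ}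
    (hp : p.Prime) (hpK : (p : K) ≠ 0) {M : linearAut f} (hpow : M ^ p = 1) (hne : M ≠ 1) :
    orderOf (d : ZMod p) ≤ Fintype.card ι := by
  have hMpow : ((M : GL ι K) : Matrix ι ι K) ^ p = 1 := by
    rw [← Units.val_pow_eq_pow_val, ← Subgroup.coe_pow, hpow, Subgroup.coe_one, Units.val_one]
  have hMne : ((M : GL ι K) : Matrix ι ι K) ≠ 1 := fun h => hne (Subtype.ext (Units.ext h))
  obtain ⟨μ, hμ, hev⟩ := exists_isPrimitiveRoot_hasEigenvalue hp hpK
    (φ := toLinAlgEquiv' ((M : GL ι K) : Matrix ι ι K)) (by rw [← map_pow, hMpow, map_one])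
    ((map_ne_one_iff _ toLinAlgEquiv'.injective).mpr hMne)
  rw [← finrank_fintype_fun_eq_card K]
  exact orderOf_le_finrank_of_hasEigenvalue hf hf0 (fun v => M.2 v) hp.ne_zero hμ hev

end LinearAut

theorem stmt17_general {K : Type*} [Field K] [IsAlgClosed K]
    (F : Fin 3 → MvPolynomial (Fin 3) K)
    (hhom : ∀ i, (F i).IsHomogeneous 2)
    (H : Subgroup (PGL3 K))
    (hsub : (H : Set (PGL3 K)) ⊆ AutQ (fun v j => MvPolynomial.eval v (F j)))
    (hiso : (2 : K) ≠ 0 ∧ Nonempty (H ≃* (Multiplicative (ZMod 2) × Multiplicative (ZMod 2))) ∨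
            (5 : K) ≠ 0 ∧ Nonempty (H ≃* Multiplicative (ZMod 5))) :
    ∃ v : Fin 3 → K, v ≠ 0 ∧ ∀ i, MvPolynomial.eval v (F i) = 0 := by
  by_contra hzero
  have hF0 (v : Fin 3 → K) (hv : v ≠ 0) : polyMap F v ≠ 0 := fun h => hzero ⟨v, hv, congrFun h⟩
  have hF := polyMap_smul hhom
  have hF0' : ∃ v, polyMap F v ≠ 0 := ⟨1, hF0 1 one_ne_zero⟩
  rcases hiso with ⟨h2, ⟨e⟩⟩ | ⟨h5, ⟨e⟩⟩
  · obtain ⟨τ, hτ⟩ := exists_injective_hom_linearAut hF hF0' hsub e.symm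
    have hne {g} (hg : g ≠ 1) : τ g ≠ 1 := (map_ne_one_iff τ hτ).mpr hg
    have hsq (g : _ × _) : τ g * τ g = 1 := by
      rw [← map_mul, (by decide : ∀ g : Multiplicative (ZMod 2) × _, g * g = 1) g, map_one]
    refine absurd (eq_of_commute_of_mul_self_eq_one (Fintype.card_fin 3) hhom two_ne_zero even_two
      hF0 h2 ((Commute.all _ _).map τ) (hsq _) (hsq _) (hne ?_) (hne ?_))
      (hτ.ne (a₁ := (.ofAdd 1, 1)) (a₂ := (1, .ofAdd 1)) ?_) <;> decide
  · obtain ⟨τ, hτ⟩ := exists_injective_hom_linearAut hF hF0' hsub e.symm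
    have hpow : τ (.ofAdd 1) ^ 5 = 1 := by rw [← map_pow]; exact map_one τ
    have horder : orderOf (2 : ZMod 5) = 2 ^ (1 + 1) :=
      orderOf_eq_prime_pow (by decide) (by decide)
    have hle := orderOf_le_card_of_pow_eq_one hF hF0 Nat.prime_five (by exact_mod_cast h5) hpow
      ((map_ne_one_iff τ hτ).mpr (by decide))
    rw [Nat.cast_ofNat, horder, Fintype.card_fin] at hle
    norm_num at hle

theorem stmt17 {K : Type*} [Field K] [IsAlgClosed K] [CharZero K]
    (F : Fin 3 → MvPolynomial (Fin 3) K)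
    (hhom : ∀ i, (F i).IsHomogeneous 2)
    (hcop : ∀ q : MvPolynomial (Fin 3) K, (∀ i, q ∣ F i) → IsUnit q)
    (hind : AlgebraicIndependent K F)
    (H : Subgroup (PGL3 K))
    (hsub : (H : Set (PGL3 K)) ⊆ AutQ (fun v j => MvPolynomial.eval v (F j)))
    (hiso : Nonempty (H ≃* (Multiplicative (ZMod 2) × Multiplicative (ZMod 2))) ∨
            Nonempty (H ≃* Multiplicative (ZMod 5))) :
    ∃ v : Fin 3 → K, v ≠ 0 ∧ ∀ i, MvPolynomial.eval v (F i) = 0 := by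
  refine stmt17_general F hhom H hsub (hiso.imp (And.intro two_ne_zero) (And.intro ?_))
  norm_num
end
end
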